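/- arXiv:2507.21784 — 3 statements merged into one kernel-verified Lean document; each statement's English description precedes it below -/
import Mathlib

section
/- Let $G$ be a finite simple graph with $n \ge 1$ vertices, $m$ edges, and h-index $h$. Then $h \ge m/n$. -/
/-- The complementary cumulative degree histogram (ccdh) of a graph:
`C(d) = |{v ∈ V : deg(v) ≥ d}|`. -/
noncomputable def ccdh {V : Type*} [Fintype V] (G : SimpleGraph V) [DecidableRel G.Adj]
    (d : ℕ) : ℕ :=
  {v : V | d ≤ G.degree v}.ncard

/-- The h-index of a graph: the largest `d ∈ [n]` with `C(d) ≥ d` (and `0` if none). -/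
noncomputable def hIndex {V : Type*} [Fintype V] (G : SimpleGraph V) [DecidableRel G.Adj] : ℕ :=
  ((Finset.Icc 1 (Fintype.card V)).filter fun d => d ≤ ccdh G d).sup id

/-!
By maximality of `h`, at most `h` vertices have degree greater than `h`. Each of these contributes
less than `n` to the degree sum, and each other vertex at most `h`, so `2 * m ≤ h * n + n * h`.
-/

section

variable {V : Type*} [Fintype V] (G : SimpleGraph V) [DecidableRel G.Adj]

theorem ccdh_eq_card_filter (d : ℕ) :
    ccdh G d = (Finset.univ.filter fun v => d ≤ G.degree v).card := by
  rw [ccdh, ← Set.ncard_coe_finset, Finset.coe_filter_univ]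

theorem ccdh_le_card (d : ℕ) : ccdh G d ≤ Fintype.card V := by
  rw [ccdh_eq_card_filter]
  exact Finset.card_le_univ _

variable {G} in
theorem le_hIndex {d : ℕ} (hd : d ≤ ccdh G d) : d ≤ hIndex G := by
  obtain rfl | hpos := d.eq_zero_or_pos
  · exact Nat.zero_le _
  · have hmem : d ∈ (Finset.Icc 1 (Fintype.card V)).filter fun d => d ≤ ccdh G d :=
      Finset.mem_filter.2 ⟨Finset.mem_Icc.2 ⟨hpos, hd.trans (ccdh_le_card G d)⟩, hd⟩
    exact Finset.le_sup (f := id) hmem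

theorem ccdh_hIndex_add_one_le : ccdh G (hIndex G + 1) ≤ hIndex G := by
  by_contra! h
  exact (le_hIndex (Nat.succ_le_of_lt h)).not_gt (Nat.lt_succ_self _)

theorem sum_degree_le_add_ccdh_mul_card (k : ℕ) :
    ∑ v, G.degree v ≤ (k + ccdh G (k + 1)) * Fintype.card V := by
  have degree_le (v : V) :
      G.degree v ≤ k + if k + 1 ≤ G.degree v then Fintype.card V else 0 := by
    have := G.degree_lt_card_verts v
    split_ifs <;> omega
  calc
    ∑ v, G.degree v ≤ ∑ v, (k + if k + 1 ≤ G.degree v then Fintype.card V else 0) :=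
      Finset.sum_le_sum fun v _ => degree_le v
    _ = (k + ccdh G (k + 1)) * Fintype.card V := by
      simp only [Finset.sum_add_distrib, ← Finset.sum_filter, Finset.sum_const, smul_eq_mul,
        Finset.card_univ, ccdh_eq_card_filter]
      ring

theorem sum_degree_eq_two_mul_ncard_edgeSet : ∑ v, G.degree v = 2 * G.edgeSet.ncard := by
  classical
  rw [G.sum_degrees_eq_twice_card_edges, ← G.coe_edgeFinset, Set.ncard_coe_finset]

theorem ncard_edgeSet_le_hIndex_mul_card : G.edgeSet.ncard ≤ hIndex G * Fintype.card V := by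
  have : 2 * G.edgeSet.ncard ≤ 2 * (hIndex G * Fintype.card V) :=
    calc
      2 * G.edgeSet.ncard = ∑ v, G.degree v := (sum_degree_eq_two_mul_ncard_edgeSet G).symm
      _ ≤ (hIndex G + ccdh G (hIndex G + 1)) * Fintype.card V :=
        sum_degree_le_add_ccdh_mul_card G (hIndex G)
      _ ≤ (hIndex G + hIndex G) * Fintype.card V := by
        gcongr
        exact ccdh_hIndex_add_one_le G
      _ = 2 * (hIndex G * Fintype.card V) := by ring
  exact Nat.le_of_mul_le_mul_left this two_pos

end

/-- For a graph with `n ≥ 1` vertices, `m` edges and h-index `h`, we have `h ≥ m/n`. -/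
theorem hIndex_ge_density {V : Type*} [Fintype V] (G : SimpleGraph V) [DecidableRel G.Adj]
    (n m : ℕ) (hn : n = Fintype.card V) (hn1 : 1 ≤ n) (hm : m = G.edgeSet.ncard) :
    (m : ℝ) / (n : ℝ) ≤ (hIndex G : ℝ) := by
  subst hn hm
  have hpos : (0 : ℝ) < Fintype.card V := by exact_mod_cast hn1
  rw [div_le_iff₀ hpos]
  exact_mod_cast ncard_edgeSet_le_hIndex_mul_card G
end

section
/- Let $M \ge 1$ and $x, y \in \{0,1\}^M$. Define the simple graph $G_{x,y}$ on vertex set $\{0,1,\dots,5M-1\}$ with, for each $i \in \{0,\dots,M-1\}$: the edge $\{5i, 5i+1\}$ if $x_i = 1$ and the edge $\{5i+1, 5i+3\}$ if $x_i = 0$; and the edge $\{5i, 5i+2\}$ if $y_i = 1$ and the edge $\{5i+2, 5i+4\}$ if $y_i = 0$; and no other edges. Then every vertex of $G_{x,y}$ has degree at most $2$, the vertex $5i$ has degree $x_i + y_i$ for each $i$, all other vertices have degree at most $1$, and consequently $C_{G_{x,y}}(2) = |\{i : x_i = 1 \text{ and } y_i = 1\}|$. In particular, if $\sum_{i} x_i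 y_i = 0$ then $C_{G_{x,y}}(2) = 0$, and if $\sum_i x_i y_i = 1$ then $C_{G_{x,y}}(2) = 1$. -/
/-- The underlying (asymmetric) edge relation of the gadget graph `G_{x,y}`: for each
`i < M`, the edge `{5i, 5i+1}` if `xᵢ = 1`, the edge `{5i+1, 5i+3}` if `xᵢ = 0`, the
edge `{5i, 5i+2}` if `yᵢ = 1`, and the edge `{5i+2, 5i+4}` if `yᵢ = 0`. -/
def gadgetRel (M : ℕ) (x y : Fin M → ℕ) : Fin (5 * M) → Fin (5 * M) → Prop := fun u w =>
  ∃ i : Fin M,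
    (x i = 1 ∧ (u : ℕ) = 5 * (i : ℕ) ∧ (w : ℕ) = 5 * (i : ℕ) + 1) ∨
    (x i = 0 ∧ (u : ℕ) = 5 * (i : ℕ) + 1 ∧ (w : ℕ) = 5 * (i : ℕ) + 3) ∨
    (y i = 1 ∧ (u : ℕ) = 5 * (i : ℕ) ∧ (w : ℕ) = 5 * (i : ℕ) + 2) ∨
    (y i = 0 ∧ (u : ℕ) = 5 * (i : ℕ) + 2 ∧ (w : ℕ) = 5 * (i : ℕ) + 4)

/-- The gadget graph `G_{x,y}` on vertex set `{0, 1, …, 5M-1}` used in the reduction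
from promise set-disjointness. -/
def gadget (M : ℕ) (x y : Fin M → ℕ) : SimpleGraph (Fin (5 * M)) :=
  SimpleGraph.fromRel (gadgetRel M x y)

noncomputable instance (M : ℕ) (x y : Fin M → ℕ) : DecidableRel (gadget M x y).Adj :=
  Classical.decRel _

/-! The pair `(xᵢ, yᵢ)` only affects the block `{5i, …, 5i + 4}`. There `5i + 1` and `5i + 2`
choose their unique neighbour according to `xᵢ` and `yᵢ`, each choosing either the root `5i` or a
private leaf, so the root has degree two exactly when both choose it. -/

theorem sum_mul_eq_ncard_of_le_one {ι : Type*} [Fintype ι] {x y : ι → ℕ}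
    (hx : ∀ i, x i ≤ 1) (hy : ∀ i, y i ≤ 1) :
    ∑ i, x i * y i = {i | x i = 1 ∧ y i = 1}.ncard := by
  classical
  have mul_eq_ite (i : ι) : x i * y i = if x i = 1 ∧ y i = 1 then 1 else 0 := by
    rcases Nat.le_one_iff_eq_zero_or_eq_one.mp (hx i) with hxi | hxi <;>
      rcases Nat.le_one_iff_eq_zero_or_eq_one.mp (hy i) with hyi | hyi <;>
      simp [hxi, hyi]
  simp_rw [mul_eq_ite, ← Finset.card_filter, Set.ncard_eq_toFinset_card', Set.toFinset_ofPred]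

section Gadget

variable {M : ℕ}

/-- The `k`-th vertex `5i + k` of the `i`-th block. Addressing vertices by block and position
replaces arithmetic on `Fin (5 * M)` by equality of pairs. -/
def gadgetVertex : Fin M × Fin 5 ≃ Fin (5 * M) :=
  finProdFinEquiv.trans (finCongr (mul_comm M 5))

theorem coe_gadgetVertex (i : Fin M) (k : Fin 5) :
    (gadgetVertex (i, k) : ℕ) = 5 * (i : ℕ) + k := by
  simp [gadgetVertex, add_comm]

theorem gadgetRel_iff (x y : Fin M → ℕ) (u w : Fin (5 * M)) :
    gadgetRel M x y u w ↔ ∃ i,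
      (x i = 1 ∧ u = gadgetVertex (i, 0) ∧ w = gadgetVertex (i, 1)) ∨
      (x i = 0 ∧ u = gadgetVertex (i, 1) ∧ w = gadgetVertex (i, 3)) ∨
      (y i = 1 ∧ u = gadgetVertex (i, 0) ∧ w = gadgetVertex (i, 2)) ∨
      (y i = 0 ∧ u = gadgetVertex (i, 2) ∧ w = gadgetVertex (i, 4)) := by
  simp [gadgetRel, Fin.ext_iff, coe_gadgetVertex]

theorem gadget_adj_iff (x y : Fin M → ℕ) (u w : Fin (5 * M)) :
    (gadget M x y).Adj u w ↔ gadgetRel M x y u w ∨ gadgetRel M x y w u := by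
  have irrefl : ¬ gadgetRel M x y u u := by
    rintro ⟨i, h⟩
    omega
  rw [gadget, SimpleGraph.fromRel_adj, and_iff_right_iff_imp]
  rintro h rfl
  exact irrefl (or_self_iff.mp h)

section Neighbors

variable (x y : Fin M → ℕ) (i : Fin M) (w : Fin (5 * M))

theorem gadget_adj_vertex_zero :
    (gadget M x y).Adj (gadgetVertex (i, 0)) w ↔
      (x i = 1 ∧ w = gadgetVertex (i, 1)) ∨ (y i = 1 ∧ w = gadgetVertex (i, 2)) := by
  simp [gadget_adj_iff, gadgetRel_iff, exists_or]

theorem gadget_adj_vertex_one :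
    (gadget M x y).Adj (gadgetVertex (i, 1)) w ↔
      (x i = 0 ∧ w = gadgetVertex (i, 3)) ∨ (x i = 1 ∧ w = gadgetVertex (i, 0)) := by
  simp [gadget_adj_iff, gadgetRel_iff]

theorem gadget_adj_vertex_two :
    (gadget M x y).Adj (gadgetVertex (i, 2)) w ↔
      (y i = 0 ∧ w = gadgetVertex (i, 4)) ∨ (y i = 1 ∧ w = gadgetVertex (i, 0)) := by
  simp [gadget_adj_iff, gadgetRel_iff]

theorem gadget_adj_vertex_three :
    (gadget M x y).Adj (gadgetVertex (i, 3)) w ↔ x i = 0 ∧ w = gadgetVertex (i, 1) := by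
  simp [gadget_adj_iff, gadgetRel_iff]

theorem gadget_adj_vertex_four :
    (gadget M x y).Adj (gadgetVertex (i, 4)) w ↔ y i = 0 ∧ w = gadgetVertex (i, 2) := by
  simp [gadget_adj_iff, gadgetRel_iff]

end Neighbors

theorem degree_gadget_vertex_zero (x y : Fin M → ℕ) (i : Fin M) :
    (gadget M x y).degree (gadgetVertex (i, 0)) =
      (if x i = 1 then 1 else 0) + (if y i = 1 then 1 else 0) := by
  have neighbors : (gadget M x y).neighborFinset (gadgetVertex (i, 0)) =
      (if x i = 1 then {gadgetVertex (i, 1)} else ∅) ∪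
        (if y i = 1 then {gadgetVertex (i, 2)} else ∅) := by
    ext w
    rw [SimpleGraph.mem_neighborFinset, gadget_adj_vertex_zero]
    split_ifs <;> simp [*]
  rw [← SimpleGraph.card_neighborFinset_eq_degree, neighbors, Finset.card_union_of_disjoint]
  · split_ifs <;> rfl
  · split_ifs <;> simp

theorem degree_gadget_vertex_le_one (x y : Fin M → ℕ) (i : Fin M) {k : Fin 5} (hk : k ≠ 0) :
    (gadget M x y).degree (gadgetVertex (i, k)) ≤ 1 := by
  rw [← SimpleGraph.card_neighborFinset_eq_degree, Finset.card_le_one]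
  simp only [SimpleGraph.mem_neighborFinset]
  intro v hv w hw
  match k with
  | 0 => exact absurd rfl hk
  | 1 =>
    rw [gadget_adj_vertex_one] at hv hw
    grind
  | 2 =>
    rw [gadget_adj_vertex_two] at hv hw
    grind
  | 3 =>
    rw [gadget_adj_vertex_three] at hv hw
    exact hv.2.trans hw.2.symm
  | 4 =>
    rw [gadget_adj_vertex_four] at hv hw
    exact hv.2.trans hw.2.symm

theorem degree_gadget_le_two (x y : Fin M → ℕ) (u : Fin (5 * M)) :
    (gadget M x y).degree u ≤ 2 := by
  obtain ⟨⟨i, k⟩, rfl⟩ := gadgetVertex.surjective u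
  rcases eq_or_ne k 0 with rfl | hk
  · rw [degree_gadget_vertex_zero]
    split_ifs <;> decide
  · exact (degree_gadget_vertex_le_one x y i hk).trans one_le_two

theorem two_le_degree_gadget_iff (x y : Fin M → ℕ) (u : Fin (5 * M)) :
    2 ≤ (gadget M x y).degree u ↔ ∃ i, (x i = 1 ∧ y i = 1) ∧ gadgetVertex (i, 0) = u := by
  obtain ⟨⟨i, k⟩, rfl⟩ := gadgetVertex.surjective u
  rcases eq_or_ne k 0 with rfl | hk
  · rw [degree_gadget_vertex_zero]
    split_ifs <;> simp [*]
  · have degree_le_one := degree_gadget_vertex_le_one x y i hk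
    simp only [EmbeddingLike.apply_eq_iff_eq, Prod.mk.injEq, hk.symm, and_false, exists_false,
      iff_false, not_le]
    exact Nat.lt_succ_of_le degree_le_one

theorem ccdh_gadget_two (x y : Fin M → ℕ) :
    ccdh (gadget M x y) 2 = {i : Fin M | x i = 1 ∧ y i = 1}.ncard := by
  have root_injective : Function.Injective fun i : Fin M => gadgetVertex (i, 0) :=
    gadgetVertex.injective.comp (Prod.mk_left_injective 0)
  rw [ccdh, ← Set.ncard_image_of_injective _ root_injective]
  congr 1
  ext u
  exact two_le_degree_gadget_iff x y u

end Gadget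

/-- **Degrees and ccdh of the gadget graph.** Every vertex of `G_{x,y}` has degree at
most `2`; the vertex `5i` has degree `xᵢ + yᵢ`; every other vertex has degree at most
`1`; consequently `C(2) = |{i : xᵢ = 1 ∧ yᵢ = 1}|`, so `C(2) = 0` when `∑ᵢ xᵢyᵢ = 0`
and `C(2) = 1` when `∑ᵢ xᵢyᵢ = 1`. -/
theorem gadget_degrees_and_ccdh (M : ℕ) (hM : 1 ≤ M) (x y : Fin M → ℕ)
    (hx : ∀ i, x i ≤ 1) (hy : ∀ i, y i ≤ 1) :
    (∀ u : Fin (5 * M), (gadget M x y).degree u ≤ 2) ∧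
    (∀ i : Fin M,
      (gadget M x y).degree ⟨5 * (i : ℕ), by have := i.isLt; omega⟩ = x i + y i) ∧
    (∀ u : Fin (5 * M), (u : ℕ) % 5 ≠ 0 → (gadget M x y).degree u ≤ 1) ∧
    ccdh (gadget M x y) 2 = {i : Fin M | x i = 1 ∧ y i = 1}.ncard ∧
    ((∑ i, x i * y i) = 0 → ccdh (gadget M x y) 2 = 0) ∧
    ((∑ i, x i * y i) = 1 → ccdh (gadget M x y) 2 = 1) := by
  have root (i : Fin M) : (gadget M x y).degree (gadgetVertex (i, 0)) = x i + y i := by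
    have := hx i
    have := hy i
    rw [degree_gadget_vertex_zero]
    split_ifs <;> omega
  have nonroot (u : Fin (5 * M)) (hu : (u : ℕ) % 5 ≠ 0) : (gadget M x y).degree u ≤ 1 := by
    obtain ⟨⟨i, k⟩, rfl⟩ := gadgetVertex.surjective u
    exact degree_gadget_vertex_le_one x y i fun hk => hu (by simp [coe_gadgetVertex, hk])
  have hsum : ∑ i, x i * y i = ccdh (gadget M x y) 2 := by
    rw [ccdh_gadget_two, sum_mul_eq_ncard_of_le_one hx hy]
  refine ⟨degree_gadget_le_two x y, fun i => ?_, nonroot, ccdh_gadget_two x y,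
    hsum.symm.trans, hsum.symm.trans⟩
  convert root i
  exact (coe_gadgetVertex i 0).symm
end

section
/- Let $h, M$ be positive integers with $4 \mid h$ and $M \ge h$, and let $x, y \in \{0,1\}^M$. Define the simple graph $H_{x,y}$ on the disjoint vertex sets $A = \{a_i\}_{i \in \mathbb{Z}_M}$, $B = \{b_i\}_{i \in \mathbb{Z}_M}$, $C = \{c_i\}_{i \in \mathbb{Z}_M}$, $D = \{d_i\}_{i \in \mathbb{Z}_M}$, $E = \{e_i\}_{i \in \mathbb{Z}_M}$ (indices modulo $M$) with edges, for each $i$: if $x_i = 1$, the edges $\{a_i, b_{i+j}\}$ for $0 \le j \le \tfrac{3h}{4}-1$ and $\{d_i, b_{i+j}\}$ for $\tfrac{3h}{4} \le j \le h-1$; if $x_i = 0$, the edges $\{a_i, b_{i+j}\}$ for $0 \le j \le \tfrac{h}{4}-1$ and $\{d_i, b_{i+j}\}$ for $\tfrac{h}{4} \le j \le h-1$; and symmetrically with $y$, $C$, $E$ in place of $x$, $B$, $D$; and no other edges. Then: (i) every vertex in $B$ and every vertex in $C$ has degree exactly $h$; (ii) every vertex in $D$ and every vertex in $E$ has degree at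 most $\tfrac{3h}{4}$; and (iii) $\deg(a_i) = \tfrac{h}{4}(1 + 2x_i) + \tfrac{h}{4}(1 + 2y_i)$, so $\deg(a_i) = \tfrac{3h}{2}$ if $x_i = y_i = 1$ and $\deg(a_i) \le h$ otherwise. -/
/-- The underlying (asymmetric) edge relation of the h-index-sensitive gadget graph
`H_{x,y}`.  The vertex set consists of five blocks `A, B, C, D, E`, each a copy of
`ZMod M`, encoded as `Fin 5 × ZMod M` with `aᵢ = (0, i)`, `bᵢ = (1, i)`, `cᵢ = (2, i)`,
`dᵢ = (3, i)`, `eᵢ = (4, i)`.  For each `i` (indices mod `M`): if `xᵢ = 1` there are the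
edges `{aᵢ, b_{i+j}}` for `0 ≤ j ≤ 3h/4 - 1` and `{dᵢ, b_{i+j}}` for
`3h/4 ≤ j ≤ h - 1`; if `xᵢ = 0` there are the edges `{aᵢ, b_{i+j}}` for
`0 ≤ j ≤ h/4 - 1` and `{dᵢ, b_{i+j}}` for `h/4 ≤ j ≤ h - 1`; and symmetrically with
`y`, `C`, `E` in place of `x`, `B`, `D`. -/
def hGadgetRel (h M : ℕ) (x y : ZMod M → ℕ) :
    Fin 5 × ZMod M → Fin 5 × ZMod M → Prop := fun u w =>
  ∃ i : ZMod M, ∃ j : ℕ, j < h ∧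
    ((u = (0, i) ∧ w = (1, i + (j : ZMod M)) ∧
        ((x i = 1 ∧ j < 3 * h / 4) ∨ (x i = 0 ∧ j < h / 4))) ∨
     (u = (3, i) ∧ w = (1, i + (j : ZMod M)) ∧
        ((x i = 1 ∧ 3 * h / 4 ≤ j) ∨ (x i = 0 ∧ h / 4 ≤ j))) ∨
     (u = (0, i) ∧ w = (2, i + (j : ZMod M)) ∧
        ((y i = 1 ∧ j < 3 * h / 4) ∨ (y i = 0 ∧ j < h / 4))) ∨
     (u = (4, i) ∧ w = (2, i + (j : ZMod M)) ∧
        ((y i = 1 ∧ 3 * h / 4 ≤ j) ∨ (y i = 0 ∧ h / 4 ≤ j))))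

/-- The h-index-sensitive gadget graph `H_{x,y}` used in the reduction from promise
set-disjointness establishing the `Ω(m/h)` lower bound. -/
def hGadget (h M : ℕ) (x y : ZMod M → ℕ) : SimpleGraph (Fin 5 × ZMod M) :=
  SimpleGraph.fromRel (hGadgetRel h M x y)

noncomputable instance (h M : ℕ) (x y : ZMod M → ℕ) :
    DecidableRel (hGadget h M x y).Adj :=
  Classical.decRel _

/-! For every index `i` and every offset `j < h` exactly one edge runs from index `i` to `b_{i+j}`:
it leaves `aᵢ` if `j` is below a cut determined by the bit `xᵢ`, and `dᵢ` otherwise.  Since `h ≤ M`,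
different offsets reach different residues modulo `M`.  Hence the degrees of `aᵢ` and `dᵢ` are
lengths of cyclic intervals, while `b_k` has one neighbour of index `k - j` for each `j < h`,
whatever the bits are.  Exchanging `x` with `y` carries this over to `C` and `E`. -/

/-- The number of edges from `aᵢ` to `B` when `xᵢ = n`, and from `aᵢ` to `C` when `yᵢ = n`: those
with offset `j` below the cut leave `aᵢ`, those with offset from the cut up to `h - 1` leave `dᵢ`
or `eᵢ`.  Only `n ≤ 1` is meaningful; every `n ≠ 1` is read as the bit `0`. -/
def hGadgetCut (h n : ℕ) : ℕ :=
  if n = 1 then 3 * h / 4 else h / 4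

/-- The cyclic interval `{i + j | p ≤ j < q}` of `ZMod M`, which wraps around `0`. -/
def cyclicIco {M : ℕ} (i : ZMod M) (p q : ℕ) : Finset (ZMod M) :=
  (Finset.Ico p q).image fun j : ℕ => i + j

theorem mem_cyclicIco {M : ℕ} {i k : ZMod M} {p q : ℕ} :
    k ∈ cyclicIco i p q ↔ ∃ j : ℕ, (p ≤ j ∧ j < q) ∧ i + j = k := by
  simp only [cyclicIco, Finset.mem_image, Finset.mem_Ico]

theorem card_cyclicIco {M : ℕ} (i : ZMod M) (p : ℕ) {q : ℕ} (hq : q ≤ M) :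
    (cyclicIco i p q).card = q - p := by
  have cast_injOn : Set.InjOn (fun j : ℕ => i + (j : ZMod M)) (Finset.Ico p q) :=
    fun a ha b hb hab =>
      CharP.natCast_injOn_Iio (ZMod M) M ((Finset.mem_Ico.mp ha).2.trans_le hq)
        ((Finset.mem_Ico.mp hb).2.trans_le hq) (add_left_cancel hab)
  rw [cyclicIco, Finset.card_image_of_injOn cast_injOn, Nat.card_Ico]

section Cut

variable {h n j : ℕ}

theorem lt_hGadgetCut_iff (hn : n ≤ 1) :
    j < hGadgetCut h n ↔ (n = 1 ∧ j < 3 * h / 4) ∨ (n = 0 ∧ j < h / 4) := by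
  unfold hGadgetCut
  split_ifs <;> omega

theorem hGadgetCut_le_iff (hn : n ≤ 1) :
    hGadgetCut h n ≤ j ↔ (n = 1 ∧ 3 * h / 4 ≤ j) ∨ (n = 0 ∧ h / 4 ≤ j) := by
  unfold hGadgetCut
  split_ifs <;> omega

theorem hGadgetCut_le (h n : ℕ) : hGadgetCut h n ≤ h := by
  unfold hGadgetCut
  split_ifs <;> omega

theorem div_four_le_hGadgetCut (h n : ℕ) : h / 4 ≤ hGadgetCut h n := by
  unfold hGadgetCut
  split_ifs <;> omega

theorem hGadgetCut_eq_mul (h4 : 4 ∣ h) (hn : n ≤ 1) :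
    hGadgetCut h n = h / 4 * (1 + 2 * n) := by
  unfold hGadgetCut
  split_ifs with h1
  · subst h1
    omega
  · obtain rfl : n = 0 := by omega
    rw [mul_zero, add_zero, mul_one]

end Cut

section Gadget

variable {h M : ℕ} {x y : ZMod M → ℕ}

/-- The pairs of blocks of `H_{x,y}` between which there may be edges: `AB`, `DB`, `AC`, `EC`. -/
def hGadgetBlockPairs : Finset (Sym2 (Fin 5)) :=
  {s(0, 1), s(3, 1), s(0, 2), s(4, 2)}

theorem hGadgetRel.mem_blockPairs {u w : Fin 5 × ZMod M} (huw : hGadgetRel h M x y u w) :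
    s(u.1, w.1) ∈ hGadgetBlockPairs := by
  obtain ⟨i, j, -, ⟨rfl, rfl, -⟩ | ⟨rfl, rfl, -⟩ | ⟨rfl, rfl, -⟩ | ⟨rfl, rfl, -⟩⟩ := huw <;>
    simp [hGadgetBlockPairs]

theorem hGadget_adj {u w : Fin 5 × ZMod M} :
    (hGadget h M x y).Adj u w ↔ hGadgetRel h M x y u w ∨ hGadgetRel h M x y w u := by
  have diag_notMem : ∀ p : Fin 5, s(p, p) ∉ hGadgetBlockPairs := by decide
  rw [hGadget, SimpleGraph.fromRel_adj, and_iff_right_iff_imp]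
  rintro (huw | hwu) rfl
  exacts [diag_notMem _ huw.mem_blockPairs, diag_notMem _ hwu.mem_blockPairs]

theorem mem_hGadgetBlockPairs_of_adj {u w : Fin 5 × ZMod M} (huw : (hGadget h M x y).Adj u w) :
    s(u.1, w.1) ∈ hGadgetBlockPairs := by
  obtain huw | hwu := hGadget_adj.mp huw
  exacts [huw.mem_blockPairs, Sym2.eq_swap ▸ hwu.mem_blockPairs]

/-- The involution of the vertices that exchanges `B` with `C` and `D` with `E`. -/
def hGadgetMirror (M : ℕ) : Equiv.Perm (Fin 5 × ZMod M) :=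
  (Equiv.swap 1 2 * Equiv.swap 3 4 : Equiv.Perm (Fin 5)).prodCongr (Equiv.refl _)

theorem hGadgetRel.mirror {u w : Fin 5 × ZMod M} (huw : hGadgetRel h M x y u w) :
    hGadgetRel h M y x (hGadgetMirror M u) (hGadgetMirror M w) := by
  obtain ⟨i, j, hj, ⟨rfl, rfl, hij⟩ | ⟨rfl, rfl, hij⟩ | ⟨rfl, rfl, hij⟩ | ⟨rfl, rfl, hij⟩⟩ := huw
  · exact ⟨i, j, hj, .inr (.inr (.inl ⟨rfl, rfl, hij⟩))⟩
  · exact ⟨i, j, hj, .inr (.inr (.inr ⟨rfl, rfl, hij⟩))⟩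
  · exact ⟨i, j, hj, .inl ⟨rfl, rfl, hij⟩⟩
  · exact ⟨i, j, hj, .inr (.inl ⟨rfl, rfl, hij⟩)⟩

theorem hGadgetMirror_involutive (M : ℕ) : Function.Involutive (hGadgetMirror M) := by
  intro u
  have swaps_sq : (Equiv.swap 1 2 * Equiv.swap 3 4 : Equiv.Perm (Fin 5)) ^ 2 = 1 := by decide
  exact Prod.ext (DFunLike.congr_fun swaps_sq u.1) rfl

theorem hGadgetRel_mirror_iff {u w : Fin 5 × ZMod M} :
    hGadgetRel h M y x (hGadgetMirror M u) (hGadgetMirror M w) ↔ hGadgetRel h M x y u w :=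
  ⟨fun huw => by simpa only [hGadgetMirror_involutive M _] using huw.mirror, hGadgetRel.mirror⟩

/-- The isomorphism `H_{x,y} ≃ H_{y,x}` that reduces statements about `C` and `E` to statements
about `B` and `D`. -/
def hGadgetMirrorIso (h : ℕ) (x y : ZMod M → ℕ) : hGadget h M x y ≃g hGadget h M y x where
  toEquiv := hGadgetMirror M
  map_rel_iff' := by
    intro u w
    rw [hGadget_adj, hGadget_adj, hGadgetRel_mirror_iff, hGadgetRel_mirror_iff]

theorem hGadget_adj_a_b {i k : ZMod M} (hx : x i ≤ 1) :
    (hGadget h M x y).Adj (0, i) (1, k) ↔ k ∈ cyclicIco i 0 (hGadgetCut h (x i)) := by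
  rw [hGadget_adj, mem_cyclicIco]
  constructor
  · rintro (⟨i, j, -, huw⟩ | ⟨i, j, -, huw⟩)
    · simp only [Prod.mk.injEq, Fin.reduceEq, true_and, false_and, and_false, or_false] at huw
      obtain ⟨rfl, rfl, hij⟩ := huw
      exact ⟨j, ⟨j.zero_le, (lt_hGadgetCut_iff hx).mpr hij⟩, rfl⟩
    · simp at huw
  · rintro ⟨j, ⟨-, hj⟩, rfl⟩
    exact .inl ⟨i, j, hj.trans_le (hGadgetCut_le h _),
      .inl ⟨rfl, rfl, (lt_hGadgetCut_iff hx).mp hj⟩⟩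

theorem hGadget_adj_d_b {i k : ZMod M} (hx : x i ≤ 1) :
    (hGadget h M x y).Adj (3, i) (1, k) ↔ k ∈ cyclicIco i (hGadgetCut h (x i)) h := by
  rw [hGadget_adj, mem_cyclicIco]
  constructor
  · rintro (⟨i, j, hj, huw⟩ | ⟨i, j, -, huw⟩)
    · simp only [Prod.mk.injEq, Fin.reduceEq, true_and, false_and, or_false, false_or] at huw
      obtain ⟨rfl, rfl, hij⟩ := huw
      exact ⟨j, ⟨(hGadgetCut_le_iff hx).mpr hij, hj⟩, rfl⟩
    · simp at huw
  · rintro ⟨j, ⟨hij, hj⟩, rfl⟩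
    exact .inl ⟨i, j, hj, .inr (.inl ⟨rfl, rfl, (hGadgetCut_le_iff hx).mp hij⟩)⟩

theorem hGadget_adj_a_c {i k : ZMod M} (hy : y i ≤ 1) :
    (hGadget h M x y).Adj (0, i) (2, k) ↔ k ∈ cyclicIco i 0 (hGadgetCut h (y i)) :=
  (hGadgetMirrorIso h x y).map_adj_iff.symm.trans (hGadget_adj_a_b hy)

variable [NeZero M]

theorem hGadget_neighborFinset_a {i : ZMod M} (hx : x i ≤ 1) (hy : y i ≤ 1) :
    (hGadget h M x y).neighborFinset (0, i) =
      {1} ×ˢ cyclicIco i 0 (hGadgetCut h (x i)) ∪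
        {2} ×ˢ cyclicIco i 0 (hGadgetCut h (y i)) := by
  ext ⟨p, k⟩
  rw [SimpleGraph.mem_neighborFinset, Finset.mem_union, Finset.mem_product, Finset.mem_product,
    Finset.mem_singleton, Finset.mem_singleton]
  by_cases hp : p = 1 ∨ p = 2
  · obtain rfl | rfl := hp
    · simp [hGadget_adj_a_b hx]
    · simp [hGadget_adj_a_c hy]
  · have block_of_pair : ∀ p, s(0, p) ∈ hGadgetBlockPairs → p = 1 ∨ p = 2 := by decide
    exact iff_of_false (fun hadj => hp (block_of_pair p (mem_hGadgetBlockPairs_of_adj hadj)))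
      fun hpk => hp (hpk.imp And.left And.left)

theorem hGadget_neighborFinset_b (hx : ∀ i, x i ≤ 1) (k : ZMod M) :
    (hGadget h M x y).neighborFinset (1, k) =
      (Finset.range h).image fun j : ℕ =>
        (if j < hGadgetCut h (x (k - j)) then 0 else 3, k - j) := by
  ext ⟨p, i⟩
  rw [SimpleGraph.mem_neighborFinset, SimpleGraph.adj_comm, Finset.mem_image]
  constructor
  · intro hadj
    have block_of_pair : ∀ p, s(p, 1) ∈ hGadgetBlockPairs → p = 0 ∨ p = 3 := by decide
    obtain rfl | rfl := block_of_pair p (mem_hGadgetBlockPairs_of_adj hadj)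
    · obtain ⟨j, ⟨-, hj⟩, rfl⟩ := mem_cyclicIco.mp ((hGadget_adj_a_b (hx i)).mp hadj)
      refine ⟨j, Finset.mem_range.mpr (hj.trans_le (hGadgetCut_le h _)), ?_⟩
      rw [add_sub_cancel_right, if_pos hj]
    · obtain ⟨j, ⟨hij, hj⟩, rfl⟩ := mem_cyclicIco.mp ((hGadget_adj_d_b (hx i)).mp hadj)
      refine ⟨j, Finset.mem_range.mpr hj, ?_⟩
      rw [add_sub_cancel_right, if_neg hij.not_gt]
  · rintro ⟨j, hj, hji⟩
    obtain ⟨rfl, rfl⟩ := Prod.mk.inj hji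
    split_ifs with hcut
    · exact (hGadget_adj_a_b (hx _)).mpr
        (mem_cyclicIco.mpr ⟨j, ⟨j.zero_le, hcut⟩, sub_add_cancel k _⟩)
    · exact (hGadget_adj_d_b (hx _)).mpr
        (mem_cyclicIco.mpr ⟨j, ⟨not_lt.mp hcut, Finset.mem_range.mp hj⟩, sub_add_cancel k _⟩)

theorem hGadget_neighborFinset_d {i : ZMod M} (hx : x i ≤ 1) :
    (hGadget h M x y).neighborFinset (3, i) = {1} ×ˢ cyclicIco i (hGadgetCut h (x i)) h := by
  ext ⟨p, k⟩
  rw [SimpleGraph.mem_neighborFinset, Finset.mem_product, Finset.mem_singleton]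
  by_cases hp : p = 1
  · subst hp
    simp [hGadget_adj_d_b hx]
  · have block_of_pair : ∀ p, s(3, p) ∈ hGadgetBlockPairs → p = 1 := by decide
    exact iff_of_false (fun hadj => hp (block_of_pair p (mem_hGadgetBlockPairs_of_adj hadj)))
      fun hpk => hp hpk.1

theorem hGadget_degree_a (hM : h ≤ M) {i : ZMod M} (hx : x i ≤ 1) (hy : y i ≤ 1) :
    (hGadget h M x y).degree (0, i) = hGadgetCut h (x i) + hGadgetCut h (y i) := by
  have blocks_disjoint : Disjoint ({1} ×ˢ cyclicIco i 0 (hGadgetCut h (x i)))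
      (({2} : Finset (Fin 5)) ×ˢ cyclicIco i 0 (hGadgetCut h (y i))) :=
    Finset.disjoint_product.mpr (.inl (by decide))
  rw [← SimpleGraph.card_neighborFinset_eq_degree, hGadget_neighborFinset_a hx hy,
    Finset.card_union_of_disjoint blocks_disjoint, Finset.card_product, Finset.card_product,
    Finset.card_singleton, Finset.card_singleton, one_mul, one_mul,
    card_cyclicIco i 0 ((hGadgetCut_le h _).trans hM),
    card_cyclicIco i 0 ((hGadgetCut_le h _).trans hM), Nat.sub_zero, Nat.sub_zero]

theorem hGadget_degree_b (hM : h ≤ M) (hx : ∀ i, x i ≤ 1) (k : ZMod M) :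
    (hGadget h M x y).degree (1, k) = h := by
  rw [← SimpleGraph.card_neighborFinset_eq_degree, hGadget_neighborFinset_b hx,
    Finset.card_image_of_injOn, Finset.card_range]
  intro j hj j' hj' hjj'
  exact CharP.natCast_injOn_Iio (ZMod M) M ((Finset.mem_range.mp hj).trans_le hM)
    ((Finset.mem_range.mp hj').trans_le hM) (sub_right_injective (congrArg Prod.snd hjj'))

theorem hGadget_degree_c (hM : h ≤ M) (hy : ∀ i, y i ≤ 1) (k : ZMod M) :
    (hGadget h M x y).degree (2, k) = h :=
  ((hGadgetMirrorIso h x y).degree_eq (2, k)).symm.trans (hGadget_degree_b hM hy k)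

theorem hGadget_degree_d (hM : h ≤ M) {i : ZMod M} (hx : x i ≤ 1) :
    (hGadget h M x y).degree (3, i) = h - hGadgetCut h (x i) := by
  rw [← SimpleGraph.card_neighborFinset_eq_degree, hGadget_neighborFinset_d hx,
    Finset.card_product, Finset.card_singleton, one_mul, card_cyclicIco i _ hM]

theorem hGadget_degree_e (hM : h ≤ M) {i : ZMod M} (hy : y i ≤ 1) :
    (hGadget h M x y).degree (4, i) = h - hGadgetCut h (y i) :=
  ((hGadgetMirrorIso h x y).degree_eq (4, i)).symm.trans (hGadget_degree_d hM hy)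

end Gadget

/-- **Degrees of the h-index-sensitive gadget graph.** (i) Every vertex in `B` and in
`C` has degree exactly `h`; (ii) every vertex in `D` and in `E` has degree at most
`3h/4`; (iii) `deg(aᵢ) = (h/4)(1 + 2xᵢ) + (h/4)(1 + 2yᵢ)`, so `deg(aᵢ) = 3h/2` if
`xᵢ = yᵢ = 1` and `deg(aᵢ) ≤ h` otherwise. -/
theorem hGadget_degrees (h M : ℕ) [NeZero M] (hh : 0 < h) (h4 : 4 ∣ h) (hM : h ≤ M)
    (x y : ZMod M → ℕ) (hx : ∀ i, x i ≤ 1) (hy : ∀ i, y i ≤ 1) :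
    (∀ i : ZMod M, (hGadget h M x y).degree (1, i) = h) ∧
    (∀ i : ZMod M, (hGadget h M x y).degree (2, i) = h) ∧
    (∀ i : ZMod M, (hGadget h M x y).degree (3, i) ≤ 3 * h / 4) ∧
    (∀ i : ZMod M, (hGadget h M x y).degree (4, i) ≤ 3 * h / 4) ∧
    (∀ i : ZMod M,
      (hGadget h M x y).degree (0, i) = h / 4 * (1 + 2 * x i) + h / 4 * (1 + 2 * y i)) ∧
    (∀ i : ZMod M, x i = 1 → y i = 1 → (hGadget h M x y).degree (0, i) = 3 * h / 2) ∧
    (∀ i : ZMod M, ¬(x i = 1 ∧ y i = 1) → (hGadget h M x y).degree (0, i) ≤ h) := by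
  have sub_hGadgetCut_le (n : ℕ) : h - hGadgetCut h n ≤ 3 * h / 4 := by
    have := div_four_le_hGadgetCut h n
    omega
  have degree_a (i : ZMod M) := hGadget_degree_a hM (hx i) (hy i)
  refine ⟨hGadget_degree_b hM hx, hGadget_degree_c hM hy, fun i => ?_, fun i => ?_, fun i => ?_,
    fun i hxi hyi => ?_, fun i hxy => ?_⟩
  · exact (hGadget_degree_d hM (hx i)).trans_le (sub_hGadgetCut_le _)
  · exact (hGadget_degree_e hM (hy i)).trans_le (sub_hGadgetCut_le _)
  · rw [degree_a, hGadgetCut_eq_mul h4 (hx i), hGadgetCut_eq_mul h4 (hy i)]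
  · rw [degree_a, hxi, hyi, hGadgetCut, if_pos rfl]
    omega
  · rw [degree_a, hGadgetCut, hGadgetCut]
    split_ifs <;> omega
end
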